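/- Let 𝒜 be an abelian category and let 𝒜₀ ⊆ 𝒜 be a full abelian subcategory. Suppose that for all objects E, F of 𝒜₀ with Hom^0(E, F) = Hom^1(E, F) = 0 one has Hom^p(E, F) = 0 for all p ∈ ℤ. Then for any two objects E, F of D^b(𝒜) whose cohomology objects all lie in 𝒜₀ and which satisfy Hom^n(E, F) = 0 for all n ≤ 0, the groups Hom^p(H^i(E), E') vanish for every p ∈ ℤ whenever E' is a cohomology object H^{i-n}(F) with n ≥ 2; in particular Hom^p(H^i(E), H^{i-2}(F)) = 0 for all i, p ∈ ℤ. -/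

import Mathlib

open CategoryTheory Limits DerivedCategory

universe w v u

noncomputable section

variable (𝒜 : Type u) [Category.{v} 𝒜] [Abelian 𝒜] [HasDerivedCategory.{w} 𝒜]

/-- The object of the derived category associated with an object of the abelian
category, placed in degree `0`. -/
abbrev degZero (A : 𝒜) : DerivedCategory 𝒜 := (DerivedCategory.singleFunctor 𝒜 0).obj A

/-- An object of the derived category is bounded (i.e. belongs to `D^b(𝒜)`) if only
finitely many of its cohomology objects are nonzero. -/
def IsBoundedComplex (E : DerivedCategory 𝒜) : Prop :=
  ∃ a b : ℤ, ∀ i : ℤ, (i < a ∨ b < i) →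
    IsZero ((DerivedCategory.homologyFunctor 𝒜 i).obj E)

/-- A collection of objects `A₀` of `𝒜` is a (strictly) full abelian subcategory if it
contains the zero objects and is closed under isomorphisms, kernels, cokernels and
finite biproducts. -/
def IsAbelianSubcategory (A₀ : Set 𝒜) : Prop :=
  (∀ X : 𝒜, IsZero X → X ∈ A₀) ∧
  (∀ X Y : 𝒜, X ∈ A₀ → Nonempty (X ≅ Y) → Y ∈ A₀) ∧
  (∀ (X Y : 𝒜) (f : X ⟶ Y), X ∈ A₀ → Y ∈ A₀ → kernel f ∈ A₀ ∧ cokernel f ∈ A₀) ∧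
  (∀ X Y : 𝒜, X ∈ A₀ → Y ∈ A₀ → (X ⊞ Y) ∈ A₀)

/-- `A₀` is almost hereditary in `𝒜`: for objects `E`, `F` of `A₀`, the vanishing of
`Hom^0(E,F)` and `Hom^1(E,F)` (computed in the derived category) implies the vanishing
of `Hom^p(E,F)` for all `p ∈ ℤ`. -/
def AlmostHereditary (A₀ : Set 𝒜) : Prop :=
  ∀ (A B : 𝒜), A ∈ A₀ → B ∈ A₀ →
    (∀ f : degZero 𝒜 A ⟶ degZero 𝒜 B, f = 0) →
    (∀ f : degZero 𝒜 A ⟶ (degZero 𝒜 B)⟦(1 : ℤ)⟧, f = 0) →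
    ∀ (p : ℤ) (f : degZero 𝒜 A ⟶ (degZero 𝒜 B)⟦p⟧), f = 0

end


section Helpers

open Pretriangulated Triangulated

variable {𝒜 : Type u} [Category.{v} 𝒜] [Abelian 𝒜] [HasDerivedCategory.{w} 𝒜]

/-- Every morphism from `X` to `Y` vanishes. -/
def HomVan (X Y : DerivedCategory 𝒜) : Prop := ∀ f : X ⟶ Y, f = 0

/-- Every morphism from `X` to a shift of `Y` vanishes. -/
def Orth (X Y : DerivedCategory 𝒜) : Prop := ∀ n : ℤ, HomVan X (Y⟦n⟧)

lemma HomVan.of_iso {X X' Y Y' : DerivedCategory 𝒜} (h : HomVan X Y) (e : X ≅ X')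
    (e' : Y ≅ Y') : HomVan X' Y' := by
  intro f
  have := h (e.hom ≫ f ≫ e'.inv)
  rw [← cancel_epi e.hom, ← cancel_mono e'.inv]
  simpa using this

lemma HomVan.shift {X Y : DerivedCategory 𝒜} (h : HomVan X Y) (a : ℤ) :
    HomVan (X⟦a⟧) (Y⟦a⟧) := by
  intro f
  obtain ⟨g, rfl⟩ := (shiftFunctor (DerivedCategory 𝒜) a).map_surjective f
  rw [h g, Functor.map_zero]

lemma HomVan.of_shift {X Y : DerivedCategory 𝒜} (a : ℤ) (h : HomVan (X⟦a⟧) (Y⟦a⟧)) :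
    HomVan X Y := by
  intro f
  apply (shiftFunctor (DerivedCategory 𝒜) a).map_injective
  rw [Functor.map_zero]
  exact h _

lemma Orth.of_iso {X X' Y Y' : DerivedCategory 𝒜} (h : Orth X Y) (e : X ≅ X')
    (e' : Y ≅ Y') : Orth X' Y' :=
  fun n => (h n).of_iso e ((shiftFunctor _ n).mapIso e')

lemma Orth.shift_right {X Y : DerivedCategory 𝒜} (h : Orth X Y) (a : ℤ) : Orth X (Y⟦a⟧) :=
  fun n => (h (a + n)).of_iso (Iso.refl _) ((shiftFunctorAdd _ a n).app Y)

lemma Orth.shift_left {X Y : DerivedCategory 𝒜} (h : Orth X Y) (a : ℤ) : Orth (X⟦a⟧) Y :=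
  fun n => ((h (n - a)).shift a).of_iso (Iso.refl _)
    ((shiftFunctorAdd' _ (n - a) a n (by lia)).symm.app Y)

lemma Orth.homVan {X Y : DerivedCategory 𝒜} (h : Orth X Y) : HomVan X Y :=
  (h 0).of_iso (Iso.refl _) ((shiftFunctorZero _ ℤ).app Y)

lemma Orth.tri_left {T : Triangle (DerivedCategory 𝒜)} (hT : T ∈ distTriang _)
    {Y : DerivedCategory 𝒜} (h₁ : Orth T.obj₁ Y) (h₃ : Orth T.obj₃ Y) : Orth T.obj₂ Y := by
  intro n f
  obtain ⟨g, rfl⟩ := Triangle.yoneda_exact₂ T hT f (h₁ n _)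
  rw [h₃ n g, comp_zero]

lemma Orth.tri_right {T : Triangle (DerivedCategory 𝒜)} (hT : T ∈ distTriang _)
    {X : DerivedCategory 𝒜} (h₁ : Orth X T.obj₁) (h₃ : Orth X T.obj₃) : Orth X T.obj₂ := by
  intro n
  refine HomVan.of_shift (-n) ?_
  refine HomVan.of_iso (X := X⟦-n⟧) (Y := T.obj₂) ?_ (Iso.refl _)
    ((shiftFunctorCompIsoId _ n (-n) (by lia)).symm.app _)
  intro f
  obtain ⟨g, rfl⟩ := Triangle.coyoneda_exact₂ T hT f ((h₃.shift_left _).homVan _)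
  rw [(h₁.shift_left (-n)).homVan g, zero_comp]

lemma homVan_of_isZero_left {X Y : DerivedCategory 𝒜} (h : IsZero X) : HomVan X Y :=
  fun _ => h.eq_of_src _ _

lemma orth_of_isZero_left {X Y : DerivedCategory 𝒜} (h : IsZero X) : Orth X Y :=
  fun _ _ => h.eq_of_src _ _

lemma orth_of_isZero_right {X Y : DerivedCategory 𝒜} (h : IsZero Y) : Orth X Y :=
  fun n _ => ((shiftFunctor (DerivedCategory 𝒜) n).map_isZero h).eq_of_tgt _ _

/-- Homology of the truncation `τ≤n`. -/
lemma homology_iso₁ {T : Triangle (DerivedCategory 𝒜)} (hT : T ∈ distTriang _) (n : ℤ)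
    (h₃ : T.obj₃.IsGE (n + 1)) (i : ℤ) (hi : i ≤ n) :
    Nonempty ((homologyFunctor 𝒜 i).obj T.obj₁ ≅ (homologyFunctor 𝒜 i).obj T.obj₂) := by
  have hz := isZero_of_isGE T.obj₃ (n + 1) i (by lia)
  have hz' := isZero_of_isGE T.obj₃ (n + 1) (i - 1) (by lia)
  have : Epi ((homologyFunctor 𝒜 i).map T.mor₁) :=
    (HomologySequence.epi_homologyMap_mor₁_iff T hT i).2 (hz.eq_of_tgt _ _)
  have : Mono ((homologyFunctor 𝒜 i).map T.mor₁) :=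
    (HomologySequence.mono_homologyMap_mor₁_iff T hT (i - 1) i (by lia)).2 (hz'.eq_of_src _ _)
  have := isIso_of_mono_of_epi ((homologyFunctor 𝒜 i).map T.mor₁)
  exact ⟨asIso ((homologyFunctor 𝒜 i).map T.mor₁)⟩

/-- Homology of the truncation `τ>n`. -/
lemma homology_iso₂ {T : Triangle (DerivedCategory 𝒜)} (hT : T ∈ distTriang _) (n : ℤ)
    (h₁ : T.obj₁.IsLE n) (i : ℤ) (hi : n + 1 ≤ i) :
    Nonempty ((homologyFunctor 𝒜 i).obj T.obj₂ ≅ (homologyFunctor 𝒜 i).obj T.obj₃) := by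
  have hz := isZero_of_isLE T.obj₁ n i (by lia)
  have hz' := isZero_of_isLE T.obj₁ n (i + 1) (by lia)
  have : Epi ((homologyFunctor 𝒜 i).map T.mor₂) :=
    (HomologySequence.epi_homologyMap_mor₂_iff T hT i (i + 1) rfl).2 (hz'.eq_of_tgt _ _)
  have : Mono ((homologyFunctor 𝒜 i).map T.mor₂) :=
    (HomologySequence.mono_homologyMap_mor₂_iff T hT i).2 (hz.eq_of_src _ _)
  have := isIso_of_mono_of_epi ((homologyFunctor 𝒜 i).map T.mor₂)
  exact ⟨asIso ((homologyFunctor 𝒜 i).map T.mor₂)⟩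

/-- Truncation triangle with all the information on homology. -/
lemma exists_trunc (X : DerivedCategory 𝒜) (n : ℤ) :
    ∃ T : Triangle (DerivedCategory 𝒜), T ∈ distTriang _ ∧ T.obj₂ = X ∧
      T.obj₁.IsLE n ∧ T.obj₃.IsGE (n + 1) ∧
      (∀ i ≤ n, Nonempty ((homologyFunctor 𝒜 i).obj T.obj₁ ≅ (homologyFunctor 𝒜 i).obj X)) ∧
      (∀ i, n + 1 ≤ i →
        Nonempty ((homologyFunctor 𝒜 i).obj T.obj₃ ≅ (homologyFunctor 𝒜 i).obj X)) ∧
      (∀ b, X.IsLE b → T.obj₃.IsLE b) ∧ (∀ a, X.IsGE a → T.obj₁.IsGE a) := by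
  obtain ⟨A, B, hA, hB, f, g, h, hT⟩ := TStructure.t.exists_triangle X n (n + 1) rfl
  have hA' : A.IsLE n := ⟨hA⟩
  have hB' : B.IsGE (n + 1) := ⟨hB⟩
  have i₁ := homology_iso₁ hT n hB'
  have i₂ := homology_iso₂ hT n hA'
  refine ⟨_, hT, rfl, hA', hB', i₁, fun i hi => ⟨(i₂ i hi).some.symm⟩, fun b hb => ?_,
    fun a ha => ?_⟩
  · rw [isLE_iff]
    intro i hi
    by_cases hin : n + 1 ≤ i
    · exact (isZero_of_isLE X b i hi).of_iso (i₂ i hin).some.symm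
    · exact isZero_of_isGE B (n + 1) i (by lia)
  · rw [isGE_iff]
    intro i hi
    by_cases hin : i ≤ n
    · exact (isZero_of_isGE X a i hi).of_iso (i₁ i hin).some
    · exact isZero_of_isLE A n i (by lia)

/-- A pure object is a shift of its homology object. -/
lemma pure_iso (X : DerivedCategory 𝒜) (n : ℤ) (h₁ : X.IsGE n) (h₂ : X.IsLE n) {A : 𝒜}
    (e : (homologyFunctor 𝒜 n).obj X ≅ A) :
    Nonempty (X ≅ (degZero 𝒜 A)⟦-n⟧) := by
  obtain ⟨Y, ⟨e'⟩⟩ := exists_iso_singleFunctor_obj_of_isGE_of_isLE X n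
  have e₁ : Y ≅ A := ((singleFunctorCompHomologyFunctorIso 𝒜 n).app Y).symm ≪≫
    (homologyFunctor 𝒜 n).mapIso e'.symm ≪≫ e
  exact ⟨e' ≪≫ (singleFunctor 𝒜 n).mapIso e₁ ≪≫
    (((singleFunctors 𝒜).shiftIso (-n) n 0 (by lia)).app A).symm⟩

lemma devissage_left (Y : DerivedCategory 𝒜) (k : ℕ) : ∀ (X : DerivedCategory 𝒜) (a : ℤ),
    X.IsGE a → X.IsLE (a + k - 1) →
    (∀ i, Orth (degZero 𝒜 ((homologyFunctor 𝒜 i).obj X)) Y) → Orth X Y := by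
  induction k with
  | zero =>
    intro X a h₁ h₂ _
    exact orth_of_isZero_left (TStructure.t.isZero X (a + (0 : ℕ) - 1) a (by simp))
  | succ k ih =>
    intro X a h₁ h₂ H
    obtain ⟨T, hT, rfl, hA, hB, i₁, i₂, h₃, h₄⟩ := exists_trunc X a
    have hA' := h₄ a h₁
    have hB' := h₃ _ h₂
    refine Orth.tri_left hT ?_ (ih _ (a + 1) hB ?_ ?_)
    · obtain ⟨e⟩ := pure_iso T.obj₁ a hA' hA (i₁ a le_rfl).some
      exact ((H a).shift_left _).of_iso e.symm (Iso.refl _)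
    · convert hB' using 1
      push_cast
      ring
    · intro i
      by_cases hi : a + 1 ≤ i
      · exact (H i).of_iso ((singleFunctor 𝒜 0).mapIso (i₂ i hi).some.symm) (Iso.refl _)
      · exact orth_of_isZero_left ((singleFunctor 𝒜 0).map_isZero
          (isZero_of_isGE _ (a + 1) i (by lia)))

lemma devissage_right (X : DerivedCategory 𝒜) (k : ℕ) : ∀ (Y : DerivedCategory 𝒜) (a : ℤ),
    Y.IsGE a → Y.IsLE (a + k - 1) →
    (∀ i, Orth X (degZero 𝒜 ((homologyFunctor 𝒜 i).obj Y))) → Orth X Y := by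
  induction k with
  | zero =>
    intro X a h₁ h₂ _
    exact orth_of_isZero_right (TStructure.t.isZero X (a + (0 : ℕ) - 1) a (by simp))
  | succ k ih =>
    intro X a h₁ h₂ H
    obtain ⟨T, hT, rfl, hA, hB, i₁, i₂, h₃, h₄⟩ := exists_trunc X a
    have hA' := h₄ a h₁
    have hB' := h₃ _ h₂
    refine Orth.tri_right hT ?_ (ih _ (a + 1) hB ?_ ?_)
    · obtain ⟨e⟩ := pure_iso T.obj₁ a hA' hA (i₁ a le_rfl).some
      exact ((H a).shift_right _).of_iso (Iso.refl _) e.symm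
    · convert hB' using 1
      push_cast
      ring
    · intro i
      by_cases hi : a + 1 ≤ i
      · exact (H i).of_iso (Iso.refl _) ((singleFunctor 𝒜 0).mapIso (i₂ i hi).some.symm)
      · exact orth_of_isZero_right ((singleFunctor 𝒜 0).map_isZero
          (isZero_of_isGE _ (a + 1) i (by lia)))

lemma devissage (X Y : DerivedCategory 𝒜) (a b c d : ℤ) (ha : X.IsGE a) (hb : X.IsLE b)
    (hc : Y.IsGE c) (hd : Y.IsLE d)
    (H : ∀ i j, Orth (degZero 𝒜 ((homologyFunctor 𝒜 i).obj X))
      (degZero 𝒜 ((homologyFunctor 𝒜 j).obj Y))) : Orth X Y := by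
  refine devissage_left Y (b - a + 1).toNat X a ha
    (TStructure.t.isLE_of_le X b _ (by lia)) fun i => ?_
  exact devissage_right _ (d - c + 1).toNat Y c hc
    (TStructure.t.isLE_of_le Y d _ (by lia)) (H i)

/-- The key diagram chase. -/
lemma key_chase {TX TX' TY TY' : Triangle (DerivedCategory 𝒜)}
    (hTX : TX ∈ distTriang _) (hTX' : TX' ∈ distTriang _)
    (hTY : TY ∈ distTriang _) (hTY' : TY' ∈ distTriang _)
    (eX : TX'.obj₂ = TX.obj₃) (eY : TY'.obj₂ = TY.obj₁) (i m : ℤ) (him : i ≤ m + 1)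
    (hmi : m ≤ i)
    (hX₁ : TX.obj₁.IsLE (i - 1)) (hA : TX'.obj₁.IsLE i)
    (hY₃ : TY.obj₃.IsGE (m + 1)) (hB : TY'.obj₃.IsGE m)
    (hXY : HomVan TX.obj₂ TY.obj₂) (h₁ : Orth TX'.obj₃ TY'.obj₃)
    (h₂ : Orth TX'.obj₂ TY'.obj₁) : HomVan TX'.obj₁ TY'.obj₃ := by
  obtain ⟨X₁, X, X₂, x₁, x₂, x₃⟩ := TX
  obtain ⟨A, X₂', X₃, a₁, a₂, a₃⟩ := TX'
  obtain ⟨Y₂, Y, Y₃, y₁, y₂, y₃⟩ := TY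
  obtain ⟨Y₁, Y₂', B, b₁, b₂, b₃⟩ := TY'
  dsimp at *
  subst eX eY
  intro f
  -- extend `f` along `A ⟶ τ≥i X`
  obtain ⟨f', hf'⟩ : ∃ f' : X₂' ⟶ B, f = a₁ ≫ f' := by
    obtain ⟨g, hg⟩ := Triangle.yoneda_exact₂ _ (inv_rot_of_distTriang _ hTX') f
      ((h₁.shift_left (-1)).homVan _)
    exact ⟨g, hg⟩
  -- lift to `τ≤m Y`
  obtain ⟨g, hg⟩ := Triangle.coyoneda_exact₃ _ hTY' f' (h₂ 1 _)
  dsimp at g hg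
  -- the composition to `Y` vanishes
  obtain ⟨δ, h, hh⟩ : ∃ (δ : Y₃⟦(-1 : ℤ)⟧ ⟶ Y₂') (h : X ⟶ Y₃⟦(-1 : ℤ)⟧), x₂ ≫ g = h ≫ δ := by
    obtain ⟨h, hh⟩ := Triangle.coyoneda_exact₂ _ (inv_rot_of_distTriang _ hTY) (x₂ ≫ g) (hXY _)
    exact ⟨_, h, hh⟩
  have hY₃' : (Y₃⟦(-1 : ℤ)⟧).IsGE (m + 2) := TStructure.t.isGE_shift Y₃ (m + 1) (-1) (m + 2)
  obtain ⟨h', hh'⟩ := Triangle.yoneda_exact₂ _ hTX h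
    (TStructure.t.zero _ (i - 1) (m + 2) (by lia))
  dsimp at h' hh'
  have hz : x₂ ≫ (g - h' ≫ δ) = 0 := by
    rw [Preadditive.comp_sub, sub_eq_zero, ← Category.assoc, ← hh']
    exact hh
  obtain ⟨r, hr⟩ := Triangle.yoneda_exact₃ _ hTX _ hz
  dsimp at r hr
  have : (X₁⟦(1 : ℤ)⟧).IsLE (i - 2) := TStructure.t.isLE_shift X₁ (i - 1) 1 (i - 2)
  have hrb : r ≫ b₂ = 0 := TStructure.t.zero _ (i - 2) m (by lia)
  have hah : a₁ ≫ h' = 0 := TStructure.t.zero _ i (m + 2) (by lia)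
  have hg' : g = h' ≫ δ + x₃ ≫ r := by rw [← hr]; abel
  rw [hf', hg, hg', Preadditive.add_comp, Category.assoc, Category.assoc, hrb, comp_zero,
    add_zero, ← Category.assoc, hah, zero_comp]

lemma key (X Y : DerivedCategory 𝒜) (a b c d : ℤ) (ha : X.IsGE a) (hb : X.IsLE b)
    (hc : Y.IsGE c) (hd : Y.IsLE d) (i m : ℤ) (him : i ≤ m + 1) (hmi : m ≤ i)
    (hXY : HomVan X Y)
    (h₁ : ∀ k, i < k → Orth (degZero 𝒜 ((homologyFunctor 𝒜 k).obj X))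
      (degZero 𝒜 ((homologyFunctor 𝒜 m).obj Y)))
    (h₂ : ∀ k l, i ≤ k → l < m → Orth (degZero 𝒜 ((homologyFunctor 𝒜 k).obj X))
      (degZero 𝒜 ((homologyFunctor 𝒜 l).obj Y))) :
    HomVan (degZero 𝒜 ((homologyFunctor 𝒜 i).obj X))
      ((degZero 𝒜 ((homologyFunctor 𝒜 m).obj Y))⟦i - m⟧) := by
  obtain ⟨TX, hTX, rfl, x₁, x₂, x₃, x₄, x₅, x₆⟩ := exists_trunc X (i - 1)
  obtain ⟨TX', hTX', eX, x₁', x₂', x₃', x₄', x₅', x₆'⟩ := exists_trunc TX.obj₃ i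
  obtain ⟨TY, hTY, rfl, y₁, y₂, y₃, y₄, y₅, y₆⟩ := exists_trunc Y m
  obtain ⟨TY', hTY', eY, y₁', y₂', y₃', y₄', y₅', y₆'⟩ := exists_trunc TY.obj₁ (m - 1)
  have x₂i : TX.obj₃.IsGE i := by simpa using x₂
  have y₂m : TY'.obj₃.IsGE m := by simpa using y₂'
  obtain ⟨eA⟩ := pure_iso TX'.obj₁ i (x₆' _ x₂i) x₁'
    ((x₃' i le_rfl).some ≪≫ (x₄ i (by lia)).some)
  obtain ⟨eB⟩ := pure_iso TY'.obj₃ m y₂m (y₅' _ y₁)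
    ((y₄' m (by lia)).some ≪≫ (y₃ m le_rfl).some)
  have hv := key_chase hTX hTX' hTY hTY' eX eY i m him hmi x₁ x₁' y₂ y₂m hXY ?_ ?_
  · refine HomVan.of_shift (-i) (hv.of_iso eA (eB ≪≫ ?_))
    exact (shiftFunctorAdd' _ (i - m) (-i) (-m) (by lia)).app _
  · refine Orth.of_iso (X := TX'.obj₃) ?_ (Iso.refl _) eB.symm
    refine Orth.shift_right ?_ _
    refine devissage_left _ (b - i).toNat _ (i + 1) x₂'
      (have := x₅' _ (x₅ _ hb); TStructure.t.isLE_of_le _ b _ (by lia)) fun k => ?_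
    by_cases hk : i < k
    · exact (h₁ k hk).of_iso ((singleFunctor 𝒜 0).mapIso
        ((x₄' k (by lia)).some ≪≫ (x₄ k (by lia)).some).symm) (Iso.refl _)
    · exact orth_of_isZero_left ((singleFunctor 𝒜 0).map_isZero
          (isZero_of_isGE _ (i + 1) k (by lia)))
  · rw [eX]
    refine devissage _ _ i b c (m - 1) x₂i (x₅ _ hb) (y₆' _ (y₆ _ hc)) y₁' fun k l => ?_
    by_cases hk : i ≤ k
    · by_cases hl : l < m
      · exact (h₂ k l hk hl).of_iso ((singleFunctor 𝒜 0).mapIso (x₄ k (by lia)).some.symm)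
          ((singleFunctor 𝒜 0).mapIso
            ((y₃' l (by lia)).some ≪≫ (y₃ l (by lia)).some).symm)
      · exact orth_of_isZero_right ((singleFunctor 𝒜 0).map_isZero
          (isZero_of_isLE _ (m - 1) l (by lia)))
    · exact orth_of_isZero_left ((singleFunctor 𝒜 0).map_isZero
          (isZero_of_isGE _ i k (by lia)))

/-- One step: vanishing of `Hom^ε(H^i E, H^{i-n} F)` for `ε = 0, 1`. -/
lemma key_step (E F : DerivedCategory 𝒜) (a b c d : ℤ) (ha : E.IsGE a) (hb : E.IsLE b)
    (hc : F.IsGE c) (hd : F.IsLE d)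
    (hvan : ∀ n : ℤ, n ≤ 0 → HomVan E (F⟦n⟧)) (n : ℤ) (hn : 1 ≤ n)
    (H : ∀ n', n < n' → ∀ i, Orth (degZero 𝒜 ((homologyFunctor 𝒜 i).obj E))
      (degZero 𝒜 ((homologyFunctor 𝒜 (i - n')).obj F)))
    (i ε : ℤ) (h₀ : 0 ≤ ε) (h₁ : ε ≤ 1) :
    HomVan (degZero 𝒜 ((homologyFunctor 𝒜 i).obj E))
      ((degZero 𝒜 ((homologyFunctor 𝒜 (i - n)).obj F))⟦ε⟧) := by
  have e : ∀ l l' : ℤ, ε - n + l = l' →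
      ((homologyFunctor 𝒜 l).obj (F⟦ε - n⟧) ≅ (homologyFunctor 𝒜 l').obj F) := fun l l' h =>
    ((homologyFunctor 𝒜 0).shiftIso (ε - n) l l' h).app F
  have H' : ∀ k l : ℤ, n < k - l → Orth (degZero 𝒜 ((homologyFunctor 𝒜 k).obj E))
      (degZero 𝒜 ((homologyFunctor 𝒜 l).obj F)) := fun k l h => by
    have := H (k - l) h k
    rwa [sub_sub_cancel] at this
  have := key E (F⟦ε - n⟧) a b (c - (ε - n)) (d - (ε - n)) ha hb
    (TStructure.t.isGE_shift F c _ _) (TStructure.t.isLE_shift F d _ _)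
    i (i - ε) (by lia) (by lia) (hvan _ (by lia))
    (fun k hk => (H' k (i - n) (by lia)).of_iso (Iso.refl _)
      ((singleFunctor 𝒜 0).mapIso (e _ _ (by lia)).symm))
    (fun k l hk hl => (H' k (ε - n + l) (by lia)).of_iso (Iso.refl _)
      ((singleFunctor 𝒜 0).mapIso (e _ _ rfl).symm))
  rw [sub_sub_cancel] at this
  exact this.of_iso (Iso.refl _)
    ((shiftFunctor _ ε).mapIso ((singleFunctor 𝒜 0).mapIso (e _ _ (by lia))))

end Helpers

theorem stmt13 {𝒜 : Type u} [Category.{v} 𝒜] [Abelian 𝒜] [HasDerivedCategory.{w} 𝒜]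
    (A₀ : Set 𝒜) (hA₀ : IsAbelianSubcategory 𝒜 A₀) (hAH : AlmostHereditary 𝒜 A₀)
    (E F : DerivedCategory 𝒜)
    (hEbdd : IsBoundedComplex 𝒜 E) (hFbdd : IsBoundedComplex 𝒜 F)
    (hE : ∀ i : ℤ, (DerivedCategory.homologyFunctor 𝒜 i).obj E ∈ A₀)
    (hF : ∀ i : ℤ, (DerivedCategory.homologyFunctor 𝒜 i).obj F ∈ A₀)
    (hvan : ∀ n : ℤ, n ≤ 0 → ∀ f : E ⟶ F⟦n⟧, f = 0) :
    (∀ (i p n : ℤ), 2 ≤ n →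
      ∀ f : degZero 𝒜 ((DerivedCategory.homologyFunctor 𝒜 i).obj E) ⟶
        (degZero 𝒜 ((DerivedCategory.homologyFunctor 𝒜 (i - n)).obj F))⟦p⟧, f = 0) ∧
    (∀ i p : ℤ,
      ∀ f : degZero 𝒜 ((DerivedCategory.homologyFunctor 𝒜 i).obj E) ⟶
        (degZero 𝒜 ((DerivedCategory.homologyFunctor 𝒜 (i - 2)).obj F))⟦p⟧, f = 0) := by
  obtain ⟨a, b, hab⟩ := hEbdd
  obtain ⟨c, d, hcd⟩ := hFbdd
  have ha : E.IsGE a := (isGE_iff E a).2 fun i hi => hab i (Or.inl hi)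
  have hb : E.IsLE b := (isLE_iff E b).2 fun i hi => hab i (Or.inr hi)
  have hc : F.IsGE c := (isGE_iff F c).2 fun i hi => hcd i (Or.inl hi)
  have hd : F.IsLE d := (isLE_iff F d).2 fun i hi => hcd i (Or.inr hi)
  have main : ∀ (k : ℕ) (n : ℤ), 1 ≤ n → b - c + 1 - k ≤ n → ∀ i,
      Orth (degZero 𝒜 ((homologyFunctor 𝒜 i).obj E))
        (degZero 𝒜 ((homologyFunctor 𝒜 (i - n)).obj F)) := by
    intro k
    induction k with
    | zero =>
      intro n hn hk i
      by_cases hi : i ≤ b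
      · exact orth_of_isZero_right ((singleFunctor 𝒜 0).map_isZero (hcd _ (Or.inl (by lia))))
      · exact orth_of_isZero_left ((singleFunctor 𝒜 0).map_isZero (hab _ (Or.inr (by lia))))
    | succ k ih =>
      intro n hn hk i
      have step := key_step E F a b c d ha hb hc hd hvan n hn
        (fun n' hn' => ih n' (by lia) (by push_cast at hk; lia)) i
      exact hAH _ _ (hE i) (hF _)
        ((step 0 le_rfl (by lia)).of_iso (Iso.refl _) ((shiftFunctorZero _ ℤ).app _))
        (step 1 (by lia) le_rfl)
  have main' : ∀ (i p n : ℤ), 2 ≤ n →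
      ∀ f : degZero 𝒜 ((DerivedCategory.homologyFunctor 𝒜 i).obj E) ⟶
        (degZero 𝒜 ((DerivedCategory.homologyFunctor 𝒜 (i - n)).obj F))⟦p⟧, f = 0 :=
    fun i p n hn => main (b - c + 1).toNat n (by lia) (by lia) i p
  exact ⟨main', fun i p => main' i p 2 le_rfl⟩
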